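/- Let R be a reduced commutative ring and n ≥ 1. If φ: A_n(R) → A_n(R) is an automorphism of R-algebras, then deg(φ^{-1}) ≤ deg(φ)^{2n−1}. -/

import Mathlib

/-- The commutation relations defining the `n`-th Weyl algebra over `R`:
`[x_i, x_j] = 0`, `[∂_i, ∂_j] = 0`, `[∂_i, x_j] = δ_{ij}`.  Generators are indexed by
`Fin n ⊕ Fin n`, with `.inl i` corresponding to `x_i` and `.inr i` to `∂_i`. -/
inductive WeylRel (R : Type*) [CommRing R] (n : ℕ) :
    FreeAlgebra R (Fin n ⊕ Fin n) → FreeAlgebra R (Fin n ⊕ Fin n) → Prop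
  | xx (i j : Fin n) : WeylRel R n
      (FreeAlgebra.ι R (.inl i) * FreeAlgebra.ι R (.inl j))
      (FreeAlgebra.ι R (.inl j) * FreeAlgebra.ι R (.inl i))
  | dd (i j : Fin n) : WeylRel R n
      (FreeAlgebra.ι R (.inr i) * FreeAlgebra.ι R (.inr j))
      (FreeAlgebra.ι R (.inr j) * FreeAlgebra.ι R (.inr i))
  | dx (i j : Fin n) : WeylRel R n
      (FreeAlgebra.ι R (.inr i) * FreeAlgebra.ι R (.inl j))
      (FreeAlgebra.ι R (.inl j) * FreeAlgebra.ι R (.inr i) + if i = j then 1 else 0)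

/-- The `n`-th Weyl algebra `A_n(R)` over a commutative ring `R`, as the quotient of the
free `R`-algebra on `x_1, …, x_n, ∂_1, …, ∂_n` by the Weyl relations. -/
abbrev WeylAlgebra (R : Type*) [CommRing R] (n : ℕ) : Type _ := RingQuot (WeylRel R n)

/-- The generator `x_i` of the Weyl algebra. -/
noncomputable def wX (R : Type*) [CommRing R] {n : ℕ} (i : Fin n) : WeylAlgebra R n :=
  RingQuot.mkAlgHom R (WeylRel R n) (FreeAlgebra.ι R (.inl i))

/-- The generator `∂_i` of the Weyl algebra. -/
noncomputable def wD (R : Type*) [CommRing R] {n : ℕ} (i : Fin n) : WeylAlgebra R n :=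
  RingQuot.mkAlgHom R (WeylRel R n) (FreeAlgebra.ι R (.inr i))

/-- The standard monomial `x^u ∂^v = x_1^{u_1} ⋯ x_n^{u_n} ∂_1^{v_1} ⋯ ∂_n^{v_n}`. -/
noncomputable def stdMon (R : Type*) [CommRing R] {n : ℕ} (u v : Fin n → ℕ) :
    WeylAlgebra R n :=
  (List.ofFn fun i => wX R i ^ u i).prod * (List.ofFn fun i => wD R i ^ v i).prod

/-- The degree of an element of the Weyl algebra: the least `d` such that the element is an
`R`-linear combination of standard monomials `x^u ∂^v` with `|u| + |v| ≤ d`. -/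
noncomputable def wdeg {R : Type*} [CommRing R] {n : ℕ} (f : WeylAlgebra R n) : ℕ :=
  sInf {d : ℕ | f ∈ Submodule.span R {g | ∃ u v : Fin n → ℕ,
      (∑ i, u i) + (∑ i, v i) ≤ d ∧ g = stdMon R u v}}

/-- The degree of an endomorphism of the Weyl algebra: the maximum of the degrees of the
images of the generators `x_1, …, x_n, ∂_1, …, ∂_n`. -/
noncomputable def weylHomDeg {R : Type*} [CommRing R] {n : ℕ}
    (φ : WeylAlgebra R n →ₐ[R] WeylAlgebra R n) : ℕ :=
  Finset.univ.sup fun i : Fin n => max (wdeg (φ (wX R i))) (wdeg (φ (wD R i)))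

/-!
The full symbol of a Weyl algebra element is the commutative polynomial with the same coefficients
in the basis of standard monomials. Symbols multiply up to terms of lower degree, so over a domain
the degree is additive on products.

Over a field `K`, let `f = φ⁻¹(x_i)` and `e = deg f`. Send an element `a` of degree at most `M + e`
to the symbol of `φ a` with `x_i` set to `0`. If `a` is in the kernel, then `φ a` is in `x_i A_n`,
so `a = f b` with `deg b ≤ M`. The image consists of polynomials in `2n - 1` variables of degree at
most `(M + e) deg φ`. Counting dimensions, the difference of two binomial coefficients on the source
side grows like `e M^(2n-1) / (2n-1)!` and the image is bounded by about
`(M deg φ)^(2n-1) / (2n-1)!`, so letting `M → ∞` gives `e ≤ (deg φ)^(2n-1)`. For `∂_i` one uses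
right multiplication instead.

If `R` is reduced, a nonzero coefficient survives in some residue field, so the degree over `R` is
the largest of the degrees over the residue fields.
-/

open MvPolynomial

section TotalDegreeLT

/-- The polynomials all of whose monomials have degree `< k`. The strict bound makes the zero
polynomial the only element for `k = 0`, so that lower order terms are meaningful in every
degree. -/
noncomputable def totalDegreeLT (R σ : Type*) [CommRing R] (k : ℕ) :
    Submodule R (MvPolynomial σ R) :=
  restrictSupport R {m | m.degree < k}

namespace totalDegreeLT

variable {R σ : Type*} [CommRing R] {p q : MvPolynomial σ R} {j k : ℕ}

theorem mem_iff : p ∈ totalDegreeLT R σ k ↔ ∀ m ∈ p.support, m.degree < k :=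
  mem_restrictSupport_iff R

theorem mem_succ_iff : p ∈ totalDegreeLT R σ (k + 1) ↔ p.totalDegree ≤ k := by
  simp only [mem_iff, Nat.lt_succ_iff, totalDegree, Finset.sup_le_iff, Finsupp.degree_apply,
    Finsupp.sum]

theorem mono (hjk : j ≤ k) (hp : p ∈ totalDegreeLT R σ j) : p ∈ totalDegreeLT R σ k :=
  restrictSupport_mono R (fun _ hm => lt_of_lt_of_le hm hjk) hp

theorem mem_zero_iff : p ∈ totalDegreeLT R σ 0 ↔ p = 0 := by
  simp [mem_iff, ← support_eq_empty, Finset.eq_empty_iff_forall_notMem]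

theorem mul_mem (hp : p ∈ totalDegreeLT R σ (j + 1)) (hq : q ∈ totalDegreeLT R σ k) :
    p * q ∈ totalDegreeLT R σ (j + k) := by
  have hpq := Submodule.mul_mem_mul hp hq
  rw [totalDegreeLT, totalDegreeLT, ← restrictSupport_add] at hpq
  refine restrictSupport_mono R ?_ hpq
  rintro _ ⟨a, ha, b, hb, rfl⟩
  simp only [Set.mem_ofPred_eq, map_add] at ha hb ⊢
  omega

theorem X_mem (i : σ) : (X i : MvPolynomial σ R) ∈ totalDegreeLT R σ 2 :=
  (monomial_mem_restrictSupport R).2 <| .inl <| by simp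

theorem pderiv_mem (i : σ) (hp : p ∈ totalDegreeLT R σ (k + 1)) :
    pderiv i p ∈ totalDegreeLT R σ k := by
  rw [mem_iff] at hp ⊢
  intro m hm
  rw [mem_support_iff, coeff_pderiv] at hm
  simpa using hp _ (mem_support_iff.2 (left_ne_zero_of_mul hm))

theorem totalDegree_eq_of_sub_mem (h : q - p ∈ totalDegreeLT R σ p.totalDegree) :
    q.totalDegree = p.totalDegree := by
  rcases hd : p.totalDegree with _ | d
  · rw [hd, mem_zero_iff, sub_eq_zero] at h
    rw [h, hd]
  · rw [hd, mem_succ_iff] at h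
    rw [← hd, ← sub_add_cancel q p]
    exact totalDegree_add_eq_right_of_totalDegree_lt (by omega)

end totalDegreeLT

end TotalDegreeLT

section MultiplicationLike

open totalDegreeLT

variable {R σ : Type*} [CommRing R]

/-- The operators on polynomials which raise the degree by at most `d` and which, up to terms of
lower order, are multiplication by a polynomial. That polynomial can be taken to be the image of
`1`. -/
def multiplicationLike (R σ : Type*) [CommRing R] (d : ℕ) :
    Submodule R (Module.End R (MvPolynomial σ R)) where
  carrier := {T | T 1 ∈ totalDegreeLT R σ (d + 1) ∧
    ∀ e, ∀ p ∈ totalDegreeLT R σ (e + 1), T p - T 1 * p ∈ totalDegreeLT R σ (d + e)}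
  zero_mem' := by simp
  add_mem' {S T} hS hT := by
    refine ⟨add_mem hS.1 hT.1, fun e p hp => ?_⟩
    convert add_mem (hS.2 e p hp) (hT.2 e p hp) using 1
    simp only [LinearMap.add_apply]
    ring
  smul_mem' r T hT := by
    refine ⟨Submodule.smul_mem _ r hT.1, fun e p hp => ?_⟩
    simpa only [LinearMap.smul_apply, smul_mul_assoc, smul_sub] using
      Submodule.smul_mem _ r (hT.2 e p hp)

namespace multiplicationLike

variable {T : Module.End R (MvPolynomial σ R)} {p : MvPolynomial σ R} {d k : ℕ}

theorem monotone : Monotone (multiplicationLike R σ) := fun _ _ hde _ hT =>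
  ⟨totalDegreeLT.mono (by omega) hT.1, fun e p hp => totalDegreeLT.mono (by omega) (hT.2 e p hp)⟩

theorem apply_mem (hT : T ∈ multiplicationLike R σ d) (hp : p ∈ totalDegreeLT R σ k) :
    T p ∈ totalDegreeLT R σ (d + k) := by
  cases k with
  | zero => simp [mem_zero_iff.1 hp]
  | succ e =>
    rw [← sub_add_cancel (T p) (T 1 * p)]
    exact add_mem (totalDegreeLT.mono (by omega) (hT.2 e p hp)) (mul_mem hT.1 hp)

instance : SetLike.GradedMonoid (multiplicationLike R σ) where
  one_mem := ⟨mem_succ_iff.2 (by simp), fun e p _ => by simp⟩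
  mul_mem d d' S T hS hT := by
    refine ⟨by simpa only [Module.End.mul_apply, add_assoc] using apply_mem hS hT.1,
      fun e p hp => ?_⟩
    have hST : S (T p - T 1 * p) ∈ totalDegreeLT R σ (d + d' + e) :=
      totalDegreeLT.mono (by omega) (apply_mem hS (hT.2 e p hp))
    have hS_mul : S (T 1 * p) - S 1 * (T 1 * p) ∈ totalDegreeLT R σ (d + d' + e) :=
      totalDegreeLT.mono (by omega)
        (hS.2 (d' + e) (T 1 * p) (totalDegreeLT.mono (by omega) (mul_mem hT.1 hp)))
    have hS_one : p * (S (T 1) - S 1 * T 1) ∈ totalDegreeLT R σ (d + d' + e) :=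
      totalDegreeLT.mono (by omega) (mul_mem hp (hS.2 d' (T 1) hT.1))
    convert sub_mem (add_mem hST hS_mul) hS_one using 1
    simp only [Module.End.mul_apply, map_sub]
    ring

theorem mulLeft_X_mem (i : σ) : LinearMap.mulLeft R (X i) ∈ multiplicationLike R σ 1 :=
  ⟨by simpa using X_mem i, fun e p _ => by simp⟩

theorem pderiv_mem (i : σ) : (pderiv i).toLinearMap ∈ multiplicationLike R σ 1 :=
  ⟨by simp, fun e p hp => by
    simpa using totalDegreeLT.mono (by omega) (totalDegreeLT.pderiv_mem i hp)⟩

end multiplicationLike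

end MultiplicationLike

section CommutingProducts

variable {M : Type*} [Monoid M] {n : ℕ}

theorem commute_prod_ofFn_pow {a : M} {g : Fin n → M} (hg : ∀ j, Commute a (g j))
    (u : Fin n → ℕ) : Commute a (List.ofFn fun j => g j ^ u j).prod := by
  refine Commute.list_prod_right _ _ fun x hx => ?_
  obtain ⟨j, rfl⟩ := List.mem_ofFn.1 hx
  exact (hg j).pow_right _

theorem prod_ofFn_pow_add_single {g : Fin n → M} (hg : ∀ i j, Commute (g i) (g j))
    (u : Fin n → ℕ) (i : Fin n) :
    (List.ofFn fun j => g j ^ (u + Pi.single i 1 : Fin n → ℕ) j).prod =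
      g i * (List.ofFn fun j => g j ^ u j).prod := by
  induction n with
  | zero => exact i.elim0
  | succ n ih =>
    rw [List.ofFn_succ, List.ofFn_succ, List.prod_cons, List.prod_cons]
    cases i using Fin.cases with
    | zero => simp [pow_succ', mul_assoc]
    | succ i =>
      have htail := ih (fun i j => hg i.succ j.succ) (fun j => u j.succ) i
      have hhead := (hg i.succ 0).pow_right (u 0)
      simp only [Pi.add_apply, Pi.single_apply] at htail
      simp only [Pi.add_apply, Pi.single_apply, Fin.succ_inj, (Fin.succ_ne_zero i).symm,
        if_false, add_zero, htail, hhead.left_comm]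

end CommutingProducts

theorem pderiv_pderiv_comm {R σ : Type*} [CommSemiring R] (i j : σ) (p : MvPolynomial σ R) :
    pderiv i (pderiv j p) = pderiv j (pderiv i p) := by
  classical
  ext m
  simp only [coeff_pderiv]
  rcases eq_or_ne i j with rfl | hij
  · ring
  · rw [add_right_comm]
    simp only [Finsupp.coe_add, Pi.add_apply, Finsupp.single_eq_of_ne hij,
      Finsupp.single_eq_of_ne hij.symm, add_zero]
    ring

section KillVariable

variable {R σ : Type*} [CommSemiring R] {z : σ}

/-- Evaluation at `X z = 0`, viewed as a map to the polynomials in the remaining variables. -/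
noncomputable def killVariable (R : Type*) {σ : Type*} [CommSemiring R] (z : σ) :
    MvPolynomial σ R →ₐ[R] MvPolynomial {j // j ≠ z} R :=
  killCompl Subtype.val_injective

theorem totalDegree_killVariable_le (p : MvPolynomial σ R) :
    (killVariable R z p).totalDegree ≤ p.totalDegree := by
  refine Finset.sup_le fun m hm => ?_
  rw [killVariable, support_killCompl, Finset.mem_preimage] at hm
  exact (Finsupp.degree_mapDomain Subtype.val m).symm.trans_le (le_totalDegree hm)

theorem X_dvd_of_killVariable_eq_zero {p : MvPolynomial σ R} (hp : killVariable R z p = 0) :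
    X z ∣ p := by
  rw [X_dvd_iff_modMonomial_eq_zero]
  ext m
  rw [coeff_zero]
  by_cases hm : Finsupp.single z 1 ≤ m
  · exact coeff_modMonomial_of_le _ hm
  · have hmz : (m.support : Set σ) ⊆ Set.range ((↑) : {j // j ≠ z} → σ) := by
      intro j hj
      refine ⟨⟨j, ?_⟩, rfl⟩
      rintro rfl
      exact hm (by simpa [Nat.one_le_iff_ne_zero] using hj)
    rw [coeff_modMonomial_of_not_le _ hm,
      ← Finsupp.mapDomain_comapDomain _ Subtype.val_injective m hmz, ← coeff_killCompl]
    exact (congrArg (coeff _) hp).trans (coeff_zero _)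

end KillVariable

section DimensionCount

theorem finrank_restrictTotalDegree (R σ : Type*) [CommSemiring R] [StrongRankCondition R]
    [Fintype σ] (d : ℕ) :
    Module.finrank R (restrictTotalDegree σ R d) =
      (d + Fintype.card σ).choose (Fintype.card σ) := by
  classical
  have hset : {m : σ →₀ ℕ | (m.sum fun _ k => k) ≤ d} =
      ((Finset.range (d + 1)).biUnion fun j => Finset.univ.finsuppAntidiag j :
        Finset (σ →₀ ℕ)) := by
    ext m
    simp [Finsupp.sum_fintype]
  have hdisj : ((Finset.range (d + 1) : Finset ℕ) : Set ℕ).PairwiseDisjoint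
      fun j => (Finset.univ : Finset σ).finsuppAntidiag j := fun i _ j _ hij =>
    Finset.disjoint_left.2 fun m hi hj =>
      hij ((Finset.mem_finsuppAntidiag.1 hi).1.symm.trans (Finset.mem_finsuppAntidiag.1 hj).1)
  rw [restrictTotalDegree, Module.finrank_eq_nat_card_basis (basisRestrictSupport R _), hset,
    Nat.card_coe_set_eq, Set.ncard_coe_finset, Finset.card_biUnion hdisj]
  simp only [Finset.card_finsuppAntidiag_nat_eq_multichoose, Finset.card_univ,
    Nat.sum_range_multichoose]

theorem finrank_le_finrank_add_finrank {K V W : Type*} [DivisionRing K] [AddCommGroup V]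
    [Module K V] [AddCommGroup W] [Module K W] {S T : Submodule K V} {U : Submodule K W}
    [FiniteDimensional K S] [FiniteDimensional K T] [FiniteDimensional K U] (L : V →ₗ[K] W)
    (hmap : S.map L ≤ U) (hker : S ⊓ L.ker ≤ T) :
    Module.finrank K S ≤ Module.finrank K U + Module.finrank K T := by
  rw [← LinearMap.finrank_range_add_finrank_ker (L.domRestrict S), LinearMap.range_domRestrict,
    ← Submodule.finrank_map_subtype_eq, LinearMap.ker_domRestrict, Submodule.map_comap_subtype]
  exact add_le_add (Submodule.finrank_mono hmap) (Submodule.finrank_mono hker)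

end DimensionCount

section Growth

open Filter Topology

theorem le_pow_of_forall_mul_pow_le {k c d e : ℕ} (h : ∀ M : ℕ, e * M ^ k ≤ (d * M + c) ^ k) :
    e ≤ d ^ k := by
  have hbound (M : ℕ) (hM : 1 ≤ M) : (e : ℝ) ≤ (d + c / M : ℝ) ^ k := by
    have hM' : (0 : ℝ) < M := by exact_mod_cast hM
    rw [← mul_le_mul_iff_left₀ (pow_pos hM' k), ← mul_pow, add_mul, div_mul_cancel₀ _ hM'.ne']
    exact_mod_cast h M
  have hlim : Tendsto (fun M : ℕ => (d + c / M : ℝ) ^ k) atTop (𝓝 ((d + 0 : ℝ) ^ k)) :=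
    (tendsto_const_nhds.add (tendsto_const_div_atTop_nhds_zero_nat _)).pow k
  have hle := ge_of_tendsto hlim (eventually_atTop.2 ⟨1, hbound⟩)
  rw [add_zero] at hle
  exact_mod_cast hle

theorem le_pow_of_forall_mul_choose_le {k c d e : ℕ}
    (h : ∀ M : ℕ, e * (M + k).choose k ≤ (d * M + c + k).choose k) : e ≤ d ^ k := by
  refine le_pow_of_forall_mul_pow_le (c := c + k) fun M => ?_
  calc e * M ^ k ≤ e * (M + 1).ascFactorial k :=
        Nat.mul_le_mul_left _ ((Nat.pow_le_pow_left (Nat.le_succ M) k).trans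
          (Nat.pow_succ_le_ascFactorial _ _))
    _ = k.factorial * (e * (M + k).choose k) := by
        rw [Nat.ascFactorial_eq_factorial_mul_choose, Nat.mul_left_comm]
    _ ≤ k.factorial * (d * M + c + k).choose k := Nat.mul_le_mul_left _ (h M)
    _ = (d * M + c + 1).ascFactorial k := (Nat.ascFactorial_eq_factorial_mul_choose _ _).symm
    _ ≤ (d * M + c + k) ^ k := Nat.ascFactorial_le_pow_add _ _
    _ = (d * M + (c + k)) ^ k := by rw [add_assoc]

theorem mul_choose_add_choose_le (k M e : ℕ) :
    e * (M + k).choose k + (M + (k + 1)).choose (k + 1) ≤ (M + e + (k + 1)).choose (k + 1) := by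
  induction e with
  | zero => simp
  | succ e ih =>
    have hmono : (M + k).choose k ≤ (M + e + (k + 1)).choose k :=
      Nat.choose_le_choose k (by omega)
    have hpascal : (M + (e + 1) + (k + 1)).choose (k + 1) =
        (M + e + (k + 1)).choose k + (M + e + (k + 1)).choose (k + 1) := by
      rw [← Nat.choose_succ_succ']
      congr 1
      omega
    rw [hpascal, add_mul]
    omega

end Growth

namespace WeylAlgebra

section Generators

variable {R : Type*} [CommRing R] {n : ℕ}

theorem commute_wX (i j : Fin n) : Commute (wX R i) (wX R j) := by
  rw [commute_iff_eq]
  simpa only [wX, map_mul] using RingQuot.mkAlgHom_rel R (WeylRel.xx (R := R) i j)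

theorem commute_wD (i j : Fin n) : Commute (wD R i) (wD R j) := by
  rw [commute_iff_eq]
  simpa only [wD, map_mul] using RingQuot.mkAlgHom_rel R (WeylRel.dd (R := R) i j)

theorem wD_mul_wX (i j : Fin n) :
    wD R i * wX R j = wX R j * wD R i + if i = j then 1 else 0 := by
  simpa only [wX, wD, map_mul, map_add, apply_ite (RingQuot.mkAlgHom R (WeylRel R n)), map_one,
    map_zero] using RingQuot.mkAlgHom_rel R (WeylRel.dx (R := R) i j)

variable {B : Type*} [Ring B] [Algebra R B]

/-- The universal property: elements `a i`, `b i` of an algebra satisfying the Weyl relations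
define a homomorphism sending `x_i` to `a i` and `∂_i` to `b i`. -/
noncomputable def lift (a b : Fin n → B) (haa : ∀ i j, Commute (a i) (a j))
    (hbb : ∀ i j, Commute (b i) (b j))
    (hba : ∀ i j, b i * a j = a j * b i + if i = j then 1 else 0) : WeylAlgebra R n →ₐ[R] B :=
  RingQuot.liftAlgHom R ⟨FreeAlgebra.lift R (Sum.elim a b), fun _ _ h => by
    cases h with
    | xx i j => simpa using (haa i j).eq
    | dd i j => simpa using (hbb i j).eq
    | dx i j => simpa [apply_ite (FreeAlgebra.lift R (Sum.elim a b))] using hba i j⟩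

@[simp]
theorem lift_wX (a b : Fin n → B) (haa hbb hba) (i : Fin n) :
    lift (R := R) a b haa hbb hba (wX R i) = a i := by
  simp [lift, wX]

@[simp]
theorem lift_wD (a b : Fin n → B) (haa hbb hba) (i : Fin n) :
    lift (R := R) a b haa hbb hba (wD R i) = b i := by
  simp [lift, wD]

@[elab_as_elim]
theorem induction {motive : WeylAlgebra R n → Prop}
    (algebraMap : ∀ r, motive (algebraMap R _ r)) (wX : ∀ i, motive (wX R i))
    (wD : ∀ i, motive (wD R i)) (add : ∀ a b, motive a → motive b → motive (a + b))
    (mul : ∀ a b, motive a → motive b → motive (a * b)) (a : WeylAlgebra R n) : motive a := by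
  obtain ⟨f, rfl⟩ := RingQuot.mkAlgHom_surjective R (WeylRel R n) a
  induction f using FreeAlgebra.induction with
  | grade0 r => simpa using algebraMap r
  | grade1 z => exact z.rec wX wD
  | mul a b ha hb => simpa using mul _ _ ha hb
  | add a b ha hb => simpa using add _ _ ha hb

theorem algHom_ext {f g : WeylAlgebra R n →ₐ[R] B} (hX : ∀ i, f (wX R i) = g (wX R i))
    (hD : ∀ i, f (wD R i) = g (wD R i)) : f = g :=
  RingQuot.ringQuot_ext' R f g <| FreeAlgebra.hom_ext <| funext fun z => z.rec hX hD

end Generators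

section Symbol

variable {R : Type*} [CommRing R] {n : ℕ}

theorem wX_mul_stdMon (u v : Fin n → ℕ) (i : Fin n) :
    wX R i * stdMon R u v = stdMon R (u + Pi.single i 1) v := by
  rw [stdMon, stdMon, prod_ofFn_pow_add_single commute_wX, mul_assoc]

theorem stdMon_mul_wD (u v : Fin n → ℕ) (i : Fin n) :
    stdMon R u v * wD R i = stdMon R u (v + Pi.single i 1) := by
  rw [stdMon, stdMon, prod_ofFn_pow_add_single commute_wD, mul_assoc,
    (commute_prod_ofFn_pow (commute_wD i) v).eq]

/-- The linear map sending the commutative monomial with exponents `u` in the variables `.inl i`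
and `v` in the variables `.inr i` to the standard monomial `x^u ∂^v`. -/
noncomputable def normalOrder (R : Type*) [CommRing R] (n : ℕ) :
    MvPolynomial (Fin n ⊕ Fin n) R →ₗ[R] WeylAlgebra R n :=
  (basisMonomials (Fin n ⊕ Fin n) R).constr R fun m => stdMon R (m ∘ Sum.inl) (m ∘ Sum.inr)

theorem normalOrder_monomial (m : Fin n ⊕ Fin n →₀ ℕ) (r : R) :
    normalOrder R n (monomial m r) = r • stdMon R (m ∘ Sum.inl) (m ∘ Sum.inr) := by
  have hm := (basisMonomials (Fin n ⊕ Fin n) R).constr_basis R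
    (fun m => stdMon R (m ∘ Sum.inl) (m ∘ Sum.inr)) m
  rw [coe_basisMonomials] at hm
  rw [← mul_one r, ← smul_eq_mul, ← smul_monomial, map_smul, normalOrder, hm, smul_eq_mul, mul_one]

theorem normalOrder_one : normalOrder R n 1 = 1 := by
  rw [← C_1, C_apply, normalOrder_monomial, one_smul]
  simp [stdMon]

theorem normalOrder_X_inl_mul (i : Fin n) (p : MvPolynomial (Fin n ⊕ Fin n) R) :
    normalOrder R n (X (.inl i) * p) = wX R i * normalOrder R n p := by
  induction p using MvPolynomial.induction_on' with
  | monomial m r =>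
    rw [X, monomial_mul, one_mul, normalOrder_monomial, normalOrder_monomial, mul_smul_comm,
      wX_mul_stdMon]
    congr 2 <;> funext j <;> simp [add_comm, Finsupp.single_apply, Pi.single_apply, eq_comm]
  | add p q hp hq => rw [mul_add, map_add, hp, hq, map_add, mul_add]

theorem normalOrder_X_inr_mul (i : Fin n) (p : MvPolynomial (Fin n ⊕ Fin n) R) :
    normalOrder R n (X (.inr i) * p) = normalOrder R n p * wD R i := by
  induction p using MvPolynomial.induction_on' with
  | monomial m r =>
    rw [X, monomial_mul, one_mul, normalOrder_monomial, normalOrder_monomial, smul_mul_assoc,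
      stdMon_mul_wD]
    congr 2 <;> funext j <;> simp [add_comm, Finsupp.single_apply, Pi.single_apply, eq_comm]
  | add p q hp hq => rw [mul_add, map_add, hp, hq, map_add, add_mul]

theorem pderiv_inl_X_inl (i j : Fin n) :
    pderiv (.inl i) (X (.inl j) : MvPolynomial (Fin n ⊕ Fin n) R) = if i = j then 1 else 0 := by
  rw [pderiv_X, Pi.single_apply]
  simp only [Sum.inl.injEq, eq_comm]

theorem normalOrder_pderiv_add_X_inr_mul (i : Fin n) (p : MvPolynomial (Fin n ⊕ Fin n) R) :
    normalOrder R n (pderiv (.inl i) p + X (.inr i) * p) = wD R i * normalOrder R n p := by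
  induction p using MvPolynomial.induction_on with
  | C r =>
    rw [pderiv_C, zero_add, normalOrder_X_inr_mul, ← mul_one (C r), ← smul_eq_C_mul, map_smul,
      normalOrder_one, smul_mul_assoc, mul_smul_comm, one_mul, mul_one]
  | add p q hp hq =>
    rw [map_add (pderiv _), mul_add, add_add_add_comm, map_add, hp, hq, map_add, mul_add]
  | mul_X p z hp =>
    cases z with
    | inl j =>
      have hleibniz : pderiv (.inl i) (p * X (.inl j)) + X (.inr i) * (p * X (.inl j)) =
          X (.inl j) * (pderiv (.inl i) p + X (.inr i) * p) + if i = j then p else 0 := by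
        simp only [Derivation.leibniz, pderiv_inl_X_inl, smul_eq_mul]
        split_ifs <;> ring
      rw [hleibniz, map_add, normalOrder_X_inl_mul, hp, mul_comm p, normalOrder_X_inl_mul,
        ← mul_assoc, ← mul_assoc, wD_mul_wX, add_mul]
      split_ifs <;> simp
    | inr j =>
      have hleibniz : pderiv (.inl i) (p * X (.inr j)) + X (.inr i) * (p * X (.inr j)) =
          X (.inr j) * (pderiv (.inl i) p + X (.inr i) * p) := by
        rw [Derivation.leibniz, pderiv_X_of_ne (by simp)]
        simp only [smul_eq_mul]
        ring
      rw [hleibniz, normalOrder_X_inr_mul, hp, mul_comm p, normalOrder_X_inr_mul, mul_assoc]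

/-- The representation of the Weyl algebra on polynomials in which `x_i` acts as multiplication by
`X (.inl i)` and `∂_i` as `∂/∂x_i + ξ_i`, where `ξ_i = X (.inr i)`. It is obtained from the action
on functions of `x` by conjugation with `exp (∑ x_i ξ_i)`, and corresponds under `normalOrder` to
left multiplication. -/
noncomputable def action (R : Type*) [CommRing R] (n : ℕ) :
    WeylAlgebra R n →ₐ[R] Module.End R (MvPolynomial (Fin n ⊕ Fin n) R) :=
  lift (fun i => LinearMap.mulLeft R (X (.inl i)))
    (fun i => (pderiv (.inl i)).toLinearMap + LinearMap.mulLeft R (X (.inr i)))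
    (fun i j => LinearMap.ext fun p => mul_left_comm _ _ p)
    (fun i j => LinearMap.ext fun p => by
      simp only [Module.End.mul_apply, LinearMap.add_apply, Derivation.coeFn_coe,
        LinearMap.mulLeft_apply, map_add, pderiv_pderiv_comm (Sum.inl i) (Sum.inl j),
        Derivation.leibniz, smul_eq_mul, pderiv_X_of_ne Sum.inr_ne_inl, mul_zero, add_zero]
      ring)
    (fun i j => LinearMap.ext fun p => by
      simp only [Module.End.mul_apply, LinearMap.mulLeft_apply, LinearMap.add_apply,
        Derivation.coeFn_coe, Derivation.leibniz, smul_eq_mul, pderiv_inl_X_inl]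
      split_ifs <;> simp only [Module.End.one_apply, LinearMap.zero_apply] <;> ring)

@[simp]
theorem action_wX (i : Fin n) : action R n (wX R i) = LinearMap.mulLeft R (X (.inl i)) :=
  lift_wX ..

@[simp]
theorem action_wD (i : Fin n) : action R n (wD R i) =
    (pderiv (.inl i)).toLinearMap + LinearMap.mulLeft R (X (.inr i)) :=
  lift_wD ..

theorem action_X_inr_mul (a : WeylAlgebra R n) (i : Fin n)
    (p : MvPolynomial (Fin n ⊕ Fin n) R) :
    action R n a (X (.inr i) * p) = X (.inr i) * action R n a p := by
  induction a using WeylAlgebra.induction generalizing p with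
  | algebraMap r => simp [Module.algebraMap_end_apply]
  | wX j => simp [mul_left_comm]
  | wD j => simp [mul_left_comm, mul_add]
  | add a b ha hb => simp [ha, hb, mul_add]
  | mul a b ha hb => simp [ha, hb]

theorem normalOrder_action (a : WeylAlgebra R n) (p : MvPolynomial (Fin n ⊕ Fin n) R) :
    normalOrder R n (action R n a p) = a * normalOrder R n p := by
  induction a using WeylAlgebra.induction generalizing p with
  | algebraMap r =>
    rw [AlgHom.commutes, Module.algebraMap_end_apply, map_smul, Algebra.smul_def]
  | wX i => simp [normalOrder_X_inl_mul]
  | wD i => simpa using normalOrder_pderiv_add_X_inr_mul i p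
  | add a b ha hb => simp [ha, hb, add_mul]
  | mul a b ha hb => simp [ha, hb, mul_assoc]

theorem action_normalOrder_one (p : MvPolynomial (Fin n ⊕ Fin n) R) :
    action R n (normalOrder R n p) 1 = p := by
  induction p using MvPolynomial.induction_on with
  | C r => rw [← mul_one (C r), ← smul_eq_C_mul, map_smul, normalOrder_one, map_smul,
      map_one (action R n), LinearMap.smul_apply, Module.End.one_apply]
  | add p q hp hq => rw [map_add, map_add, LinearMap.add_apply, hp, hq]
  | mul_X p z hp =>
    rw [mul_comm]
    cases z with
    | inl i => rw [normalOrder_X_inl_mul, map_mul, Module.End.mul_apply, hp, action_wX,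
        LinearMap.mulLeft_apply]
    | inr i =>
      have hD : action R n (wD R i) 1 = X (.inr i) * 1 := by simp
      rw [normalOrder_X_inr_mul, map_mul, Module.End.mul_apply, hD, action_X_inr_mul, hp]

/-- The full symbol: the commutative polynomial with the same coefficients as the expansion of an
element of the Weyl algebra in standard monomials. -/
noncomputable def symbol (R : Type*) [CommRing R] (n : ℕ) :
    WeylAlgebra R n ≃ₗ[R] MvPolynomial (Fin n ⊕ Fin n) R :=
  .ofLinearMap (LinearMap.applyₗ 1 ∘ₗ (action R n).toLinearMap) (normalOrder R n)
    (LinearMap.ext action_normalOrder_one)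
    (LinearMap.ext fun a => by simp [normalOrder_action, normalOrder_one])

theorem symbol_apply (a : WeylAlgebra R n) : symbol R n a = action R n a 1 := rfl

theorem symbol_symm_apply (p : MvPolynomial (Fin n ⊕ Fin n) R) :
    (symbol R n).symm p = normalOrder R n p := rfl

theorem symbol_mul (a b : WeylAlgebra R n) :
    symbol R n (a * b) = action R n a (symbol R n b) := by
  simp [symbol_apply]

theorem wX_ne_zero [Nontrivial R] (i : Fin n) : wX R i ≠ 0 := by
  rw [← (symbol R n).map_ne_zero_iff, symbol_apply, action_wX]
  simp

theorem wD_ne_zero [Nontrivial R] (i : Fin n) : wD R i ≠ 0 := by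
  rw [← (symbol R n).map_ne_zero_iff, symbol_apply, action_wD]
  simp

theorem symbol_wX_mul (i : Fin n) (a : WeylAlgebra R n) :
    symbol R n (wX R i * a) = X (.inl i) * symbol R n a := by
  simp [symbol_mul]

theorem symbol_mul_wD (a : WeylAlgebra R n) (i : Fin n) :
    symbol R n (a * wD R i) = X (.inr i) * symbol R n a := by
  rw [symbol_mul, symbol_apply, symbol_apply, ← action_X_inr_mul]
  simp

end Symbol

section BernsteinFiltration

variable {R : Type*} [CommRing R] {n : ℕ}

/-- The Bernstein filtration: the span of the standard monomials of degree at most `d`. -/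
noncomputable def bernstein (R : Type*) [CommRing R] (n d : ℕ) : Submodule R (WeylAlgebra R n) :=
  Submodule.span R {g | ∃ u v : Fin n → ℕ, (∑ i, u i) + (∑ i, v i) ≤ d ∧ g = stdMon R u v}

theorem setOf_stdMon_eq_image_normalOrder (d : ℕ) :
    {g | ∃ u v : Fin n → ℕ, (∑ i, u i) + (∑ i, v i) ≤ d ∧ g = stdMon R u v} =
      normalOrder R n '' ((monomial · 1) '' {m | (m.sum fun _ k => k) ≤ d}) := by
  have hsum (m : Fin n ⊕ Fin n →₀ ℕ) :
      (m.sum fun _ k => k) = ∑ i, m (.inl i) + ∑ i, m (.inr i) := by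
    rw [Finsupp.sum_fintype _ _ fun _ => rfl, Fintype.sum_sum_type]
  ext g
  simp only [Set.mem_ofPred_eq, Set.mem_image, exists_exists_and_eq_and, normalOrder_monomial,
    one_smul, hsum]
  constructor
  · rintro ⟨u, v, huv, rfl⟩
    exact ⟨Finsupp.equivFunOnFinite.symm (Sum.elim u v), by simpa using huv, by simp⟩
  · rintro ⟨m, hm, rfl⟩
    exact ⟨m ∘ Sum.inl, m ∘ Sum.inr, hm, rfl⟩

theorem bernstein_eq_map (d : ℕ) :
    bernstein R n d = (restrictTotalDegree (Fin n ⊕ Fin n) R d).map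
      (symbol R n).symm.toLinearMap := by
  rw [bernstein, setOf_stdMon_eq_image_normalOrder, Submodule.span_image,
    restrictTotalDegree, restrictSupport_eq_span]
  rfl

theorem mem_bernstein_iff {a : WeylAlgebra R n} {d : ℕ} :
    a ∈ bernstein R n d ↔ (symbol R n a).totalDegree ≤ d := by
  rw [bernstein_eq_map, Submodule.mem_map_equiv, mem_restrictTotalDegree, LinearEquiv.symm_symm]

theorem bernstein_mono : Monotone (bernstein R n) := fun _ _ hde _ ha =>
  mem_bernstein_iff.2 ((mem_bernstein_iff.1 ha).trans hde)

theorem wdeg_eq_totalDegree_symbol (a : WeylAlgebra R n) :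
    wdeg a = (symbol R n a).totalDegree := by
  change sInf {d | a ∈ bernstein R n d} = _
  simp only [mem_bernstein_iff]
  exact csInf_Ici

theorem mem_bernstein_iff_wdeg_le {a : WeylAlgebra R n} {d : ℕ} :
    a ∈ bernstein R n d ↔ wdeg a ≤ d := by
  rw [mem_bernstein_iff, wdeg_eq_totalDegree_symbol]

theorem algHom_apply_mem_of_mem_bernstein {B : Type*} [Ring B] [Algebra R B]
    {F : ℕ → Submodule R B} [SetLike.GradedMonoid F] (hF : Monotone F)
    {f : WeylAlgebra R n →ₐ[R] B} {d : ℕ} (hX : ∀ i, f (wX R i) ∈ F d)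
    (hD : ∀ i, f (wD R i) ∈ F d) {a : WeylAlgebra R n} {k : ℕ} (ha : a ∈ bernstein R n k) :
    f a ∈ F (k * d) := by
  have hprod {g : Fin n → WeylAlgebra R n} (hg : ∀ i, f (g i) ∈ F d) (u : Fin n → ℕ) :
      f (List.ofFn fun i => g i ^ u i).prod ∈ F ((∑ i, u i) * d) := by
    rw [map_list_prod, List.map_ofFn, Finset.sum_mul, ← List.sum_ofFn]
    refine SetLike.list_prod_ofFn_mem_graded _ _ fun i => ?_
    simpa using SetLike.pow_mem_graded (u i) (hg i)
  suffices bernstein R n k ≤ (F (k * d)).comap f.toLinearMap from this ha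
  refine Submodule.span_le.2 ?_
  rintro _ ⟨u, v, huv, rfl⟩
  refine hF (Nat.mul_le_mul_right d huv) ?_
  rw [add_mul, AlgHom.toLinearMap_apply, stdMon, map_mul]
  exact SetLike.mul_mem_graded (hprod hX u) (hprod hD v)

theorem action_mem_multiplicationLike {a : WeylAlgebra R n} {d : ℕ} (ha : a ∈ bernstein R n d) :
    action R n a ∈ multiplicationLike R (Fin n ⊕ Fin n) d := by
  rw [← mul_one d]
  refine algHom_apply_mem_of_mem_bernstein multiplicationLike.monotone (fun i => ?_)
    (fun i => ?_) ha
  · rw [action_wX]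
    exact multiplicationLike.mulLeft_X_mem _
  · rw [action_wD]
    exact add_mem (multiplicationLike.pderiv_mem _) (multiplicationLike.mulLeft_X_mem _)

instance : SetLike.GradedMonoid (bernstein R n) where
  one_mem := by simp [mem_bernstein_iff, symbol_apply]
  mul_mem d e a b ha hb := by
    rw [mem_bernstein_iff, ← totalDegreeLT.mem_succ_iff] at hb ⊢
    rw [symbol_mul, add_assoc]
    exact multiplicationLike.apply_mem (action_mem_multiplicationLike ha) hb

theorem symbol_mul_sub_mem (a b : WeylAlgebra R n) :
    symbol R n (a * b) - symbol R n a * symbol R n b ∈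
      totalDegreeLT R (Fin n ⊕ Fin n) (wdeg a + wdeg b) := by
  have ha := action_mem_multiplicationLike (mem_bernstein_iff_wdeg_le.2 (le_refl (wdeg a)))
  rw [symbol_mul, symbol_apply a]
  exact ha.2 _ _ (totalDegreeLT.mem_succ_iff.2 (wdeg_eq_totalDegree_symbol b).ge)

theorem wdeg_mul [IsDomain R] {a b : WeylAlgebra R n} (ha : a ≠ 0) (hb : b ≠ 0) :
    wdeg (a * b) = wdeg a + wdeg b := by
  have hab : (symbol R n a * symbol R n b).totalDegree = wdeg a + wdeg b := by
    rw [totalDegree_mul_of_isDomain (by simpa using ha) (by simpa using hb),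
      wdeg_eq_totalDegree_symbol, wdeg_eq_totalDegree_symbol]
  rw [wdeg_eq_totalDegree_symbol, ← hab]
  exact totalDegreeLT.totalDegree_eq_of_sub_mem (hab ▸ symbol_mul_sub_mem a b)

theorem weylHomDeg_le_iff {φ : WeylAlgebra R n →ₐ[R] WeylAlgebra R n} {N : ℕ} :
    weylHomDeg φ ≤ N ↔ ∀ i, wdeg (φ (wX R i)) ≤ N ∧ wdeg (φ (wD R i)) ≤ N := by
  simp [weylHomDeg]

theorem algHom_apply_mem_bernstein (φ : WeylAlgebra R n →ₐ[R] WeylAlgebra R n)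
    {a : WeylAlgebra R n} {k : ℕ} (ha : a ∈ bernstein R n k) :
    φ a ∈ bernstein R n (k * weylHomDeg φ) := by
  have hφ := weylHomDeg_le_iff.1 (le_refl (weylHomDeg φ))
  exact algHom_apply_mem_of_mem_bernstein bernstein_mono
    (fun i => mem_bernstein_iff_wdeg_le.2 (hφ i).1) (fun i => mem_bernstein_iff_wdeg_le.2 (hφ i).2)
    ha

end BernsteinFiltration

section BaseChange

variable {R : Type*} [CommRing R] {n : ℕ} (K : Type*) [CommRing K] [Algebra R K]

/-- The map `A_n(R) → A_n(K)` applying `algebraMap R K` to the coefficients. -/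
noncomputable def baseChange : WeylAlgebra R n →ₐ[R] WeylAlgebra K n :=
  lift (wX K) (wD K) commute_wX commute_wD wD_mul_wX

@[simp]
theorem baseChange_wX (i : Fin n) : baseChange K (wX R i) = wX K i :=
  lift_wX ..

@[simp]
theorem baseChange_wD (i : Fin n) : baseChange K (wD R i) = wD K i :=
  lift_wD ..

theorem baseChange_stdMon (u v : Fin n → ℕ) : baseChange K (stdMon R u v) = stdMon K u v := by
  simp [stdMon, map_list_prod, List.map_ofFn, Function.comp_def]

theorem baseChange_normalOrder (p : MvPolynomial (Fin n ⊕ Fin n) R) :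
    baseChange K (normalOrder R n p) = normalOrder K n (map (algebraMap R K) p) := by
  induction p using MvPolynomial.induction_on' with
  | monomial m r =>
    rw [map_monomial, normalOrder_monomial, normalOrder_monomial, map_smul, baseChange_stdMon,
      algebraMap_smul]
  | add p q hp hq => simp only [map_add, hp, hq]

theorem symbol_baseChange (a : WeylAlgebra R n) :
    symbol K n (baseChange K a) = map (algebraMap R K) (symbol R n a) := by
  rw [← LinearEquiv.eq_symm_apply, symbol_symm_apply, ← baseChange_normalOrder,
    ← symbol_symm_apply, LinearEquiv.symm_apply_apply]

theorem wdeg_baseChange_le (a : WeylAlgebra R n) : wdeg (baseChange K a) ≤ wdeg a := by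
  rw [wdeg_eq_totalDegree_symbol, wdeg_eq_totalDegree_symbol, symbol_baseChange]
  exact Finset.sup_mono (support_map_subset ..)

/-- The `K`-linear extension of an endomorphism of `A_n(R)` to `A_n(K)`. -/
noncomputable def homBaseChange (φ : WeylAlgebra R n →ₐ[R] WeylAlgebra R n) :
    WeylAlgebra K n →ₐ[K] WeylAlgebra K n :=
  lift (fun i => baseChange K (φ (wX R i))) (fun i => baseChange K (φ (wD R i)))
    (fun i j => ((commute_wX i j).map φ).map (baseChange K))
    (fun i j => ((commute_wD i j).map φ).map (baseChange K))
    (fun i j => by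
      rw [← map_mul, ← map_mul, wD_mul_wX, map_add, map_add, map_mul, map_mul]
      split_ifs <;> simp)

@[simp]
theorem homBaseChange_wX (φ : WeylAlgebra R n →ₐ[R] WeylAlgebra R n) (i : Fin n) :
    homBaseChange K φ (wX K i) = baseChange K (φ (wX R i)) :=
  lift_wX ..

@[simp]
theorem homBaseChange_wD (φ : WeylAlgebra R n →ₐ[R] WeylAlgebra R n) (i : Fin n) :
    homBaseChange K φ (wD K i) = baseChange K (φ (wD R i)) :=
  lift_wD ..

theorem homBaseChange_baseChange (φ : WeylAlgebra R n →ₐ[R] WeylAlgebra R n)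
    (a : WeylAlgebra R n) : homBaseChange K φ (baseChange K a) = baseChange K (φ a) := by
  have h : ((homBaseChange K φ).restrictScalars R).comp (baseChange K) =
      (baseChange K).comp φ :=
    algHom_ext (fun i => by simp) (fun i => by simp)
  exact AlgHom.congr_fun h a

theorem homBaseChange_comp_eq_id {φ ψ : WeylAlgebra R n →ₐ[R] WeylAlgebra R n}
    (h : φ.comp ψ = .id R _) : (homBaseChange K φ).comp (homBaseChange K ψ) = .id K _ := by
  have hφψ (a : WeylAlgebra R n) : φ (ψ a) = a := AlgHom.congr_fun h a
  exact algHom_ext (fun i => by simp [homBaseChange_baseChange, hφψ])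
    (fun i => by simp [homBaseChange_baseChange, hφψ])

/-- The `K`-linear extension of an automorphism of `A_n(R)` to `A_n(K)`. -/
noncomputable def equivBaseChange (φ : WeylAlgebra R n ≃ₐ[R] WeylAlgebra R n) :
    WeylAlgebra K n ≃ₐ[K] WeylAlgebra K n :=
  .ofAlgHom (homBaseChange K φ.toAlgHom) (homBaseChange K φ.symm.toAlgHom)
    (homBaseChange_comp_eq_id K φ.comp_symm) (homBaseChange_comp_eq_id K φ.symm_comp)

theorem weylHomDeg_homBaseChange_le (φ : WeylAlgebra R n →ₐ[R] WeylAlgebra R n) :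
    weylHomDeg (homBaseChange K φ) ≤ weylHomDeg φ :=
  Finset.sup_mono_fun fun i _ => by
    rw [homBaseChange_wX, homBaseChange_wD]
    exact max_le_max (wdeg_baseChange_le K _) (wdeg_baseChange_le K _)

end BaseChange

section ReductionToFields

variable {R : Type*} [CommRing R] [IsReduced R] {n : ℕ}

theorem wdeg_le_of_forall_residueField {a : WeylAlgebra R n} {N : ℕ}
    (h : ∀ (I : Ideal R) [I.IsPrime], wdeg (baseChange I.ResidueField a) ≤ N) : wdeg a ≤ N := by
  rw [wdeg_eq_totalDegree_symbol]
  refine Finset.sup_le fun m hm => ?_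
  obtain ⟨I, hI, hmI⟩ : ∃ I : Ideal R, I.IsPrime ∧ coeff m (symbol R n a) ∉ I := by
    by_contra! hI
    exact mem_support_iff.1 hm (nilpotent_iff_mem_prime.2 hI).eq_zero
  refine le_trans ?_ (h I)
  rw [wdeg_eq_totalDegree_symbol, symbol_baseChange]
  refine le_totalDegree (mem_support_iff.2 ?_)
  rwa [coeff_map, Ne, Ideal.algebraMap_residueField_eq_zero]

theorem weylHomDeg_le_of_forall_residueField {φ : WeylAlgebra R n →ₐ[R] WeylAlgebra R n} {N : ℕ}
    (h : ∀ (I : Ideal R) [I.IsPrime], weylHomDeg (homBaseChange I.ResidueField φ) ≤ N) :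
    weylHomDeg φ ≤ N := by
  refine weylHomDeg_le_iff.2 fun i => ⟨?_, ?_⟩ <;>
    refine wdeg_le_of_forall_residueField fun I _ => ?_
  · simpa using (weylHomDeg_le_iff.1 (h I) i).1
  · simpa using (weylHomDeg_le_iff.1 (h I) i).2

end ReductionToFields

section Automorphism

variable {K : Type*} [Field K] {n : ℕ}

instance finite_bernstein (d : ℕ) : FiniteDimensional K (bernstein K n d) := by
  rw [bernstein_eq_map]
  infer_instance

theorem finrank_bernstein (d : ℕ) :
    Module.finrank K (bernstein K n d) = (d + 2 * n).choose (2 * n) := by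
  rw [bernstein_eq_map, LinearEquiv.finrank_map_eq, finrank_restrictTotalDegree, Fintype.card_sum,
    Fintype.card_fin, ← two_mul]

theorem finrank_bernstein_add_le {φ : WeylAlgebra K n →ₐ[K] WeylAlgebra K n}
    {z : Fin n ⊕ Fin n} {G : WeylAlgebra K n →ₗ[K] WeylAlgebra K n} {e : ℕ}
    (hG : ∀ b, b ≠ 0 → wdeg (G b) = wdeg b + e)
    (hz : ∀ a, X z ∣ symbol K n (φ a) → a ∈ G.range) (M : ℕ) :
    Module.finrank K (bernstein K n (M + e)) ≤
      Module.finrank K (restrictTotalDegree {j // j ≠ z} K ((M + e) * weylHomDeg φ)) +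
        Module.finrank K (bernstein K n M) := by
  let L : WeylAlgebra K n →ₗ[K] MvPolynomial {j // j ≠ z} K :=
    (killVariable K z).toLinearMap ∘ₗ (symbol K n).toLinearMap ∘ₗ φ.toLinearMap
  have hmap : (bernstein K n (M + e)).map L ≤
      restrictTotalDegree {j // j ≠ z} K ((M + e) * weylHomDeg φ) := by
    rintro _ ⟨a, ha, rfl⟩
    rw [mem_restrictTotalDegree]
    exact (totalDegree_killVariable_le _).trans
      (mem_bernstein_iff.1 (algHom_apply_mem_bernstein φ ha))
  have hker : bernstein K n (M + e) ⊓ L.ker ≤ (bernstein K n M).map G := by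
    rintro a ⟨ha, haL⟩
    obtain ⟨b, rfl⟩ := hz a (X_dvd_of_killVariable_eq_zero haL)
    rcases eq_or_ne b 0 with rfl | hb
    · simp
    · have hGb := mem_bernstein_iff_wdeg_le.1 ha
      rw [hG b hb, Nat.add_le_add_iff_right] at hGb
      exact Submodule.mem_map_of_mem (mem_bernstein_iff_wdeg_le.2 hGb)
  exact (finrank_le_finrank_add_finrank L hmap hker).trans
    (Nat.add_le_add_left (Submodule.finrank_map_le G (bernstein K n M)) _)

theorem le_weylHomDeg_pow_of_forall_X_dvd {φ : WeylAlgebra K n →ₐ[K] WeylAlgebra K n}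
    {z : Fin n ⊕ Fin n} {G : WeylAlgebra K n →ₗ[K] WeylAlgebra K n} {e : ℕ}
    (hG : ∀ b, b ≠ 0 → wdeg (G b) = wdeg b + e)
    (hz : ∀ a, X z ∣ symbol K n (φ a) → a ∈ G.range) : e ≤ weylHomDeg φ ^ (2 * n - 1) := by
  have hn : 0 < n := z.elim Fin.pos Fin.pos
  obtain ⟨k, hk⟩ : ∃ k, 2 * n = k + 1 := Nat.exists_eq_add_one.2 (by omega)
  have hcard : Fintype.card {j // j ≠ z} = k := by
    rw [Fintype.card_subtype_compl, Fintype.card_subtype_eq, Fintype.card_sum, Fintype.card_fin]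
    omega
  rw [hk, Nat.add_sub_cancel]
  refine le_pow_of_forall_mul_choose_le (c := e * weylHomDeg φ) fun M => ?_
  have hdim := finrank_bernstein_add_le hG hz M
  rw [finrank_restrictTotalDegree, finrank_bernstein, finrank_bernstein, hcard, hk] at hdim
  have hgrowth := mul_choose_add_choose_le k M e
  rw [mul_comm (weylHomDeg φ) M, ← add_mul]
  omega

theorem wdeg_symm_wX_le (φ : WeylAlgebra K n ≃ₐ[K] WeylAlgebra K n) (i : Fin n) :
    wdeg (φ.symm (wX K i)) ≤ weylHomDeg φ.toAlgHom ^ (2 * n - 1) := by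
  have hne : φ.symm (wX K i) ≠ 0 := (map_ne_zero_iff _ φ.symm.injective).2 (wX_ne_zero i)
  refine le_weylHomDeg_pow_of_forall_X_dvd (z := .inl i)
    (G := LinearMap.mulLeft K (φ.symm (wX K i))) (fun b hb => ?_) fun a ⟨q, hq⟩ => ?_
  · rw [LinearMap.mulLeft_apply, wdeg_mul hne hb, add_comm]
  · have ha : φ a = wX K i * (symbol K n).symm q := by
      apply (symbol K n).injective
      rw [symbol_wX_mul, LinearEquiv.apply_symm_apply]
      exact hq
    exact ⟨φ.symm ((symbol K n).symm q), by
      rw [LinearMap.mulLeft_apply, ← map_mul, ← ha, φ.symm_apply_apply]⟩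

theorem wdeg_symm_wD_le (φ : WeylAlgebra K n ≃ₐ[K] WeylAlgebra K n) (i : Fin n) :
    wdeg (φ.symm (wD K i)) ≤ weylHomDeg φ.toAlgHom ^ (2 * n - 1) := by
  have hne : φ.symm (wD K i) ≠ 0 := (map_ne_zero_iff _ φ.symm.injective).2 (wD_ne_zero i)
  refine le_weylHomDeg_pow_of_forall_X_dvd (z := .inr i)
    (G := LinearMap.mulRight K (φ.symm (wD K i))) (fun b hb => ?_) fun a ⟨q, hq⟩ => ?_
  · rw [LinearMap.mulRight_apply, wdeg_mul hb hne]
  · have ha : φ a = (symbol K n).symm q * wD K i := by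
      apply (symbol K n).injective
      rw [symbol_mul_wD, LinearEquiv.apply_symm_apply]
      exact hq
    exact ⟨φ.symm ((symbol K n).symm q), by
      rw [LinearMap.mulRight_apply, ← map_mul, ← ha, φ.symm_apply_apply]⟩

theorem weylHomDeg_symm_le (φ : WeylAlgebra K n ≃ₐ[K] WeylAlgebra K n) :
    weylHomDeg φ.symm.toAlgHom ≤ weylHomDeg φ.toAlgHom ^ (2 * n - 1) :=
  weylHomDeg_le_iff.2 fun i => ⟨wdeg_symm_wX_le φ i, wdeg_symm_wD_le φ i⟩

end Automorphism

end WeylAlgebra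

/-- Let `R` be a reduced commutative ring and `n ≥ 1`.  If
`φ : A_n(R) → A_n(R)` is an automorphism of `R`-algebras, then
`deg(φ⁻¹) ≤ deg(φ)^(2n−1)`. -/
theorem weylAlgebra_automorphism_inverse_degree_bound (R : Type*) [CommRing R] [IsReduced R]
    (n : ℕ) (hn : 1 ≤ n) (φ : WeylAlgebra R n ≃ₐ[R] WeylAlgebra R n) :
    weylHomDeg φ.symm.toAlgHom ≤ weylHomDeg φ.toAlgHom ^ (2 * n - 1) := by
  refine WeylAlgebra.weylHomDeg_le_of_forall_residueField fun I _ => ?_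
  calc weylHomDeg (WeylAlgebra.equivBaseChange I.ResidueField φ).symm.toAlgHom
      ≤ weylHomDeg (WeylAlgebra.equivBaseChange I.ResidueField φ).toAlgHom ^ (2 * n - 1) :=
        WeylAlgebra.weylHomDeg_symm_le _
    _ ≤ weylHomDeg φ.toAlgHom ^ (2 * n - 1) :=
        Nat.pow_le_pow_left (WeylAlgebra.weylHomDeg_homBaseChange_le _ _) _
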